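/- Let g be a seven-dimensional real Lie algebra with a six-dimensional abelian ideal u and let e₇ ∈ g∖u. Then the following are equivalent: (i) there exists a closed four-form Ψ ∈ Λ⁴g* such that for some basis f¹,…,f⁷ of g*, Ψ = f^{1234}−f^{1256}−f^{3456}−f^{2467}+f^{2357}+f^{1457}+f^{1367} (i.e. g admits a cocalibrated G₂*-structure); (ii) there exists a closed four-form Ω ∈ Λ⁴Ann(span(e₇)) of length l(Ω) ≥ 2. -/

import Mathlib

open Module

section AltMachinery

variable {F : Type*} [Field F] {V : Type*} [AddCommGroup V] [Module F V]

/-- The wedge `φ₁ ∧ … ∧ φ_m` of `m` covectors, as an alternating `m`-form on `V`: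
`(φ₁ ∧ … ∧ φ_m)(v₁,…,v_m) = det (φ_i (v_j))`. -/
noncomputable def wedgeCov (m : ℕ) (φ : Fin m → Module.Dual F V) :
    V [⋀^Fin m]→ₗ[F] F :=
  (Matrix.detRowAlternating : (Fin m → F) [⋀^Fin m]→ₗ[F] F).compLinearMap
    (LinearMap.pi φ)

/-- A decomposable alternating `m`-form: a wedge of `m` covectors. -/
def AltDec (m : ℕ) (X : V [⋀^Fin m]→ₗ[F] F) : Prop :=
  ∃ φ : Fin m → Module.Dual F V, X = wedgeCov m φ

/-- The `m`-form `X` is a sum of `l` decomposable `m`-forms. -/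
def AltLenLE (m l : ℕ) (X : V [⋀^Fin m]→ₗ[F] F) : Prop :=
  ∃ Y : Fin l → (V [⋀^Fin m]→ₗ[F] F), (∀ i, AltDec m (Y i)) ∧ X = ∑ i, Y i

/-- The `m`-form `X` has length `l`: it is a sum of `l` decomposable `m`-forms and of no
smaller number of them. -/
def AltHasLen (m l : ℕ) (X : V [⋀^Fin m]→ₗ[F] F) : Prop :=
  AltLenLE m l X ∧ ∀ j < l, ¬ AltLenLE m j X

end AltMachinery

section CE

variable {F : Type*} [Field F] {g : Type*} [LieRing g] [LieAlgebra F g]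

/-- The Chevalley–Eilenberg differential of a `(k+1)`-form (given as a function on tuples):
`(dρ)(x₀,…,x_{k+1}) = ∑_{i<j} (-1)^{i+j} ρ(⁅x_i,x_j⁆, x₀,…,x̂_i,…,x̂_j,…,x_{k+1})`. -/
noncomputable def ceDiff (k : ℕ) (ρ : (Fin (k + 1) → g) → F) : (Fin (k + 2) → g) → F :=
  fun x => ∑ i : Fin (k + 2), ∑ j : Fin (k + 2),
    if h : (i : ℕ) < (j : ℕ) then
      (-1 : F) ^ ((i : ℕ) + (j : ℕ)) *
        ρ (Fin.cons ⁅x i, x j⁆ fun l : Fin k =>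
            x (j.succAbove ((⟨(i : ℕ),
              Nat.lt_of_lt_of_le h (Nat.lt_succ_iff.mp j.isLt)⟩ : Fin (k + 1)).succAbove l)))
    else 0

end CE

section G2Forms

variable {F : Type*} [Field F] {g : Type*} [AddCommGroup g] [Module F g]

/-- The wedge `f^i ∧ f^j ∧ f^k ∧ f^l` of four covectors from the basis `b` of `g*`. -/
noncomputable def bw (b : Basis (Fin 7) F (Module.Dual F g)) (i j k l : Fin 7) :
    g [⋀^Fin 4]→ₗ[F] F :=
  wedgeCov 4 ![b i, b j, b k, b l]

/-- The four-form `f^{1234}+f^{1256}+f^{3456}-f^{2467}+f^{2357}+f^{1457}+f^{1367}` (the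
Hodge dual of a `G₂`- resp. `(G₂)_ℂ`-structure), written with `0`-based indices. -/
noncomputable def stdG2 (b : Basis (Fin 7) F (Module.Dual F g)) : g [⋀^Fin 4]→ₗ[F] F :=
  bw b 0 1 2 3 + bw b 0 1 4 5 + bw b 2 3 4 5 - bw b 1 3 5 6 +
    bw b 1 2 4 6 + bw b 0 3 4 6 + bw b 0 2 5 6

/-- The four-form `f^{1234}-f^{1256}-f^{3456}-f^{2467}+f^{2357}+f^{1457}+f^{1367}` (the
Hodge dual of a `G₂*`-structure), written with `0`-based indices. -/
noncomputable def stdG2star (b : Basis (Fin 7) F (Module.Dual F g)) :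
    g [⋀^Fin 4]→ₗ[F] F :=
  bw b 0 1 2 3 - bw b 0 1 4 5 - bw b 2 3 4 5 - bw b 1 3 5 6 +
    bw b 1 2 4 6 + bw b 0 3 4 6 + bw b 0 2 5 6

/-- Membership in `Λ⁴W ⊆ Λ⁴g*` for a subspace `W ⊆ g*`: the span of the wedges of four
covectors from `W`. -/
def mem4Pow (W : Submodule F (Module.Dual F g)) (Ω : g [⋀^Fin 4]→ₗ[F] F) : Prop :=
  Ω ∈ Submodule.span F
    {Y : g [⋀^Fin 4]→ₗ[F] F |
      ∃ φ : Fin 4 → Module.Dual F g, (∀ i, φ i ∈ W) ∧ Y = wedgeCov 4 φ}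

end G2Forms

/-!
If `f` is the covector with kernel `u` and `f e₇ = 1`, the bracket of `g` is
`⁅x, y⁆ = f x • D y - f y • D x` with `D = ad e₇`, so that `dρ = -f ∧ (D·ρ)`. Hence whether `ρ` is
closed depends only on its restriction to `u`. As restriction identifies `Λ⁴Ann(e₇)` with `Λ⁴u*`
and preserves decomposability in both directions, it remains to see that the four-forms on `u`
that are restrictions of `G₂*` four-forms are exactly the indecomposable ones.

A decomposable four-form on the six-dimensional `u` is annihilated by some `x ≠ 0`. If `Ψ` is a
`G₂*` four-form with such a restriction, then `f ∧ (x ⌟ Ψ) = 0`, which says that `f ⊗ x` lies in the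
stabiliser of `Ψ`. This is impossible, since the stabiliser is contained in `𝔰𝔬(4, 3)`, which has no
elements of rank one.

Conversely, a four-form on `u` amounts to an alternating bilinear form on `u*`. The Darboux normal
form of the latter leaves, up to a scalar, only `b^{3456} + b^{1256}` and
`b^{3456} + b^{1256} + b^{1234}` as indecomposable four-forms, and explicit coframes exhibit every
nonzero multiple of them as the restriction of a `G₂*` four-form to a hyperplane.
-/

section AlternatingForms

variable {F : Type*} [Field F] {V : Type*} [AddCommGroup V] [Module F V] {n : ℕ}

theorem alternatingMap_ext_of_span_eq_top {s : Set V} (hs : Submodule.span F s = ⊤)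
    {A B : V [⋀^Fin n]→ₗ[F] F}
    (h : ∀ v : Fin n → V, v.Injective → (∀ i, v i ∈ s) → A v = B v) : A = B := by
  have hs' : ⊤ ≤ Submodule.span F s := hs.ge
  refine (Basis.ofSpan hs').ext_alternating fun v hv ↦ h _ ?_ fun i ↦ ?_
  · exact (Basis.ofSpan hs').injective.comp hv
  · exact Basis.ofSpan_subset hs' ⟨v i, rfl⟩

/-- The wedge product `f ∧ A` of a covector with an alternating form, bilinear in both arguments
and normalised so that it is compatible with `wedgeCov` (no factorials). -/
noncomputable def covWedge :
    Dual F V →ₗ[F] (V [⋀^Fin n]→ₗ[F] F) →ₗ[F] (V [⋀^Fin (n + 1)]→ₗ[F] F) :=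
  (LinearMap.smulRightₗ : Dual F V →ₗ[F] (V [⋀^Fin n]→ₗ[F] F) →ₗ[F] _).compr₂
    AlternatingMap.alternatizeUncurryFinLM

theorem covWedge_apply (f : Dual F V) (A : V [⋀^Fin n]→ₗ[F] F) (v : Fin (n + 1) → V) :
    covWedge f A v = ∑ i : Fin (n + 1), (-1) ^ (i : ℕ) * (f (v i) * A (i.removeNth v)) := by
  simp [covWedge, AlternatingMap.alternatizeUncurryFin_apply]

/-- The derivation action of an endomorphism `D` on forms,
`(D·A)(v₀,…,v_n) = ∑ i, A(v₀,…,D v_i,…,v_n)`, with `D v_i` moved to the front in each summand. -/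
noncomputable def endAction (D : End F V) (A : V [⋀^Fin (n + 1)]→ₗ[F] F) :
    V [⋀^Fin (n + 1)]→ₗ[F] F :=
  AlternatingMap.alternatizeUncurryFin (A.curryLeft ∘ₗ D)

theorem endAction_apply (D : End F V) (A : V [⋀^Fin (n + 1)]→ₗ[F] F) (v : Fin (n + 1) → V) :
    endAction D A v =
      ∑ i : Fin (n + 1), (-1) ^ (i : ℕ) * A (Matrix.vecCons (D (v i)) (i.removeNth v)) := by
  simp [endAction, AlternatingMap.alternatizeUncurryFin_apply]

theorem endAction_smulRight (f : Dual F V) (x : V) (A : V [⋀^Fin (n + 1)]→ₗ[F] F) :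
    endAction (f.smulRight x) A = covWedge f (A.curryLeft x) := by
  ext v
  simp only [endAction_apply, covWedge_apply, ← AlternatingMap.curryLeft_apply_apply]
  simp

theorem span_insert_ker_eq_top {f : Dual F V} {e : V} (he : f e = 1) :
    Submodule.span F (insert e (LinearMap.ker f : Set V)) = ⊤ := by
  refine eq_top_iff.mpr fun x _ ↦ Submodule.mem_span_insert.mpr ⟨f x, x - f x • e, ?_, by simp⟩
  exact Submodule.subset_span (by simp [he])

theorem covWedge_eq_zero {f : Dual F V} {A : V [⋀^Fin n]→ₗ[F] F}
    (hA : ∀ v : Fin n → V, (∀ i, f (v i) = 0) → A v = 0) : covWedge f A = 0 := by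
  obtain rfl | hf := eq_or_ne f 0
  · simp
  obtain ⟨e, he⟩ : ∃ e, f e = 1 := LinearMap.surjective hf 1
  refine alternatingMap_ext_of_span_eq_top (span_insert_ker_eq_top he) fun v hv hvs ↦ ?_
  rw [covWedge_apply]
  refine Finset.sum_eq_zero fun i _ ↦ ?_
  obtain hi | hi := hvs i
  · rw [hA _ fun j ↦ ?_]
    · simp
    · exact (hvs _).resolve_left fun h ↦ i.succAbove_ne j (hv (h.trans hi.symm))
  · simp [LinearMap.mem_ker.mp hi]

end AlternatingForms

section ChevalleyEilenberg

variable {F : Type*} [Field F] {g : Type*} [LieRing g] {k : ℕ}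

theorem ceDiff_apply (ρ : (Fin (k + 1) → g) → F) (v : Fin (k + 2) → g) :
    ceDiff k ρ v = ∑ i : Fin (k + 1), ∑ j ≥ i, (-1) ^ (i + j + 1 : ℕ) *
      ρ (Matrix.vecCons ⁅v i.castSucc, v j.succ⁆ (j.removeNth (i.castSucc.removeNth v))) := by
  have swap {i j : Fin (k + 1)} (h : i ≤ j) :
      j.removeNth (i.castSucc.removeNth v) = i.removeNth (j.succ.removeNth v) := by
    rw [Fin.removeNth_removeNth_eq_swap]
    simp [Fin.predAbove, h.not_gt, Fin.succAbove]
  rw [ceDiff, Fin.sum_univ_castSucc, add_eq_left.mpr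
    (Finset.sum_eq_zero fun j _ ↦ dif_neg (Nat.not_lt.mpr j.is_le))]
  refine Finset.sum_congr rfl fun i _ ↦ ?_
  rw [Fin.sum_univ_succ, add_eq_right.mpr (dif_neg (Nat.not_lt_zero _)), ← Finset.filter_le_eq_Ici,
    Finset.sum_filter]
  refine Finset.sum_congr rfl fun j _ ↦ ?_
  by_cases h : i ≤ j
  · rw [if_pos h, swap h]
    exact dif_pos (Nat.lt_succ_of_le h)
  · rw [if_neg h]
    exact dif_neg (by simpa using h)

variable [LieAlgebra F g]

theorem ceDiff_eq_neg_covWedge_endAction {f : Dual F g} {D : End F g}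
    (hD : ∀ x y : g, ⁅x, y⁆ = f x • D y - f y • D x) (A : g [⋀^Fin (k + 1)]→ₗ[F] F) :
    ceDiff k A = -⇑(covWedge f (endAction D A)) := by
  have key : covWedge f (endAction D A) = AlternatingMap.alternatizeUncurryFin
    (AlternatingMap.alternatizeUncurryFinLM ∘ₗ
      (f.smulRight (A.curryLeft ∘ₗ D) : g →ₗ[F] g →ₗ[F] g [⋀^Fin k]→ₗ[F] F)) := by
    ext v
    simp [covWedge_apply, AlternatingMap.alternatizeUncurryFin_apply, endAction_apply]
  funext v
  have cons_bracket (x y : g) (w : Fin k → g) : A (Matrix.vecCons ⁅x, y⁆ w) =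
      f x * A (Matrix.vecCons (D y) w) - f y * A (Matrix.vecCons (D x) w) := by
    simp only [hD, ← AlternatingMap.curryLeft_apply_apply]
    simp
  rw [key, Pi.neg_apply, AlternatingMap.alternatizeUncurryFin_alternatizeUncurryFinLM_comp_apply,
    ceDiff_apply]
  simp only [cons_bracket, ← Finset.sum_neg_distrib]
  refine Finset.sum_congr rfl fun i _ ↦ Finset.sum_congr rfl fun j _ ↦ ?_
  simp [pow_succ]

theorem ceDiff_congr {f : Dual F g} {D : End F g}
    (hD : ∀ x y : g, ⁅x, y⁆ = f x • D y - f y • D x) (hDf : ∀ x, f (D x) = 0)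
    {A B : g [⋀^Fin (k + 1)]→ₗ[F] F} (hAB : ∀ v : Fin (k + 1) → g, (∀ i, f (v i) = 0) → A v = B v) :
    ceDiff k A = ceDiff k B := by
  rw [ceDiff_eq_neg_covWedge_endAction hD, ceDiff_eq_neg_covWedge_endAction hD, neg_inj,
    DFunLike.coe_fn_eq, ← sub_eq_zero, ← map_sub]
  refine covWedge_eq_zero fun v hv ↦ ?_
  rw [AlternatingMap.sub_apply, sub_eq_zero, endAction_apply, endAction_apply]
  refine Finset.sum_congr rfl fun i _ ↦ congrArg _ (hAB _ (Fin.cons (hDf _) fun j ↦ hv _))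

end ChevalleyEilenberg

section FourForms

variable {F : Type*} [Field F] {V : Type*} [AddCommGroup V] [Module F V]

theorem wedgeCov_apply {n : ℕ} (φ : Fin n → Dual F V) (v : Fin n → V) :
    wedgeCov n φ v = (Matrix.of fun i j ↦ φ j (v i)).det :=
  rfl

theorem wedgeCov_four_apply (a b c d : Dual F V) (x y z w : V) :
    wedgeCov 4 ![a, b, c, d] ![x, y, z, w] =
      a x * (b y * (c z * d w - c w * d z) - b z * (c y * d w - c w * d y)
        + b w * (c y * d z - c z * d y))
      - a y * (b x * (c z * d w - c w * d z) - b z * (c x * d w - c w * d x)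
        + b w * (c x * d z - c z * d x))
      + a z * (b x * (c y * d w - c w * d y) - b y * (c x * d w - c w * d x)
        + b w * (c x * d y - c y * d x))
      - a w * (b x * (c y * d z - c z * d y) - b y * (c x * d z - c z * d x)
        + b z * (c x * d y - c y * d x)) := by
  rw [wedgeCov_apply, Matrix.det_succ_row_zero, Fin.sum_univ_four]
  simp only [Matrix.det_fin_three, Matrix.submatrix_apply, Matrix.of_apply, Matrix.cons_val,
    Fin.coe_ofNat_eq_mod, Fin.succAbove, Fin.castSucc_zero, Fin.castSucc_one, Fin.reduceCastSucc,
    Fin.succ_zero_eq_one, Fin.succ_one_eq_two, Fin.reduceSucc, Fin.lt_one_iff, Fin.reduceLT,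
    lt_self_iff_false, Fin.reduceEq, not_lt_zero, ↓reduceIte]
  ring

theorem endAction_four_apply (D : End F V) (A : V [⋀^Fin 4]→ₗ[F] F) (x y z w : V) :
    endAction D A ![x, y, z, w] =
      A ![D x, y, z, w] - A ![D y, x, z, w] + A ![D z, x, y, w] - A ![D w, x, y, z] := by
  have h0 : (0 : Fin 4).removeNth ![x, y, z, w] = ![y, z, w] := rfl
  have h1 : (1 : Fin 4).removeNth ![x, y, z, w] = ![x, z, w] := List.ofFn_inj.mp rfl
  have h2 : (2 : Fin 4).removeNth ![x, y, z, w] = ![x, y, w] := List.ofFn_inj.mp rfl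
  have h3 : (3 : Fin 4).removeNth ![x, y, z, w] = ![x, y, z] := List.ofFn_inj.mp rfl
  rw [endAction_apply, Fin.sum_univ_four, h0, h1, h2, h3]
  simp only [Fin.coe_ofNat_eq_mod, Matrix.cons_val]
  ring

theorem exists_basis_dualBasis_eq {ι : Type*} [Finite ι] [DecidableEq ι]
    (b : Basis ι F (Dual F V)) : ∃ E : Basis ι F V, b = E.dualBasis := by
  have := Module.Finite.of_basis b
  have : Module.Finite F V := (Module.finite_dual_iff F).mp this
  refine ⟨b.dualBasis.map (evalEquiv F V).symm, Basis.eq_of_apply_eq fun i ↦ ?_⟩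
  refine Basis.ext (b.dualBasis.map (evalEquiv F V).symm) fun j ↦ ?_
  rw [Basis.dualBasis_apply_self]
  simp [Finsupp.single_apply, eq_comm]

/-- The signs of the split metric `∑ ε i • (f^i)²` of signature `(4, 3)` that a `G₂*`-structure
with adapted coframe `f` induces. -/
def splitSign : Fin 7 → ℤˣ := ![1, 1, 1, 1, -1, -1, -1]

-- The Lie algebra of the stabiliser of `stdG2star`, split `𝔤₂`, lies in `𝔰𝔬(4, 3)`.
theorem splitSign_smul_add_eq_zero_of_endAction_stdG2star_eq_zero (h2 : (2 : F) ≠ 0)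
    (E : Basis (Fin 7) F V) {T : End F V} (hT : endAction T (stdG2star E.dualBasis) = 0)
    (i j : Fin 7) :
    splitSign i • E.dualBasis i (T (E j)) + splitSign j • E.dualBasis j (T (E i)) = 0 := by
  have h (i j k l : Fin 7) := congr($hT ![E i, E j, E k, E l])
  simp only [endAction_four_apply, stdG2star, bw, AlternatingMap.add_apply,
    AlternatingMap.sub_apply, AlternatingMap.zero_apply, wedgeCov_four_apply,
    Basis.dualBasis_apply_self, ite_mul, one_mul, zero_mul, mul_ite, mul_one, mul_zero] at h
  obtain ⟨t, ht⟩ : ∃ t : Fin 7 → Fin 7 → F, ∀ i j, E.dualBasis i (T (E j)) = t i j :=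
    ⟨_, fun _ _ ↦ rfl⟩
  simp only [ht] at h ⊢
  clear ht hT
  have diag : t 0 0 = 0 ∧ t 1 1 = 0 ∧ t 2 2 = 0 ∧ t 3 3 = 0 ∧ t 4 4 = 0 ∧ t 5 5 = 0 ∧
      t 6 6 = 0 := by
    have : (32 : F) ≠ 0 := by simpa [show (32 : F) = 2 ^ 5 by norm_num] using h2
    replace h : _ ∧ _ ∧ _ ∧ _ ∧ _ ∧ _ ∧ _ :=
      ⟨h 0 1 2 3, h 0 1 4 5, h 2 3 4 5, h 1 3 5 6, h 1 2 4 6, h 0 3 4 6, h 0 2 5 6⟩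
    grind
  have off₁ : t 0 6 = t 6 0 ∧ t 2 5 = t 5 2 ∧ t 3 4 = t 4 3 := by
    replace h : _ ∧ _ ∧ _ ∧ _ := ⟨h 0 1 2 4, h 0 1 3 5, h 1 2 3 6, h 1 4 5 6⟩
    grind
  have off₂ : t 0 1 = -t 1 0 ∧ t 2 3 = -t 3 2 ∧ t 4 5 = -t 5 4 := by
    replace h : _ ∧ _ ∧ _ ∧ _ := ⟨h 0 2 4 6, h 0 3 5 6, h 1 2 5 6, h 1 3 4 6⟩
    grind
  have off₃ : t 0 2 = -t 2 0 ∧ t 1 3 = -t 3 1 ∧ t 5 6 = -t 6 5 := by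
    replace h : _ ∧ _ ∧ _ ∧ _ := ⟨h 0 1 4 6, h 0 3 4 5, h 1 2 4 5, h 2 3 4 6⟩
    grind
  have off₄ : t 0 3 = -t 3 0 ∧ t 1 2 = -t 2 1 ∧ t 4 6 = -t 6 4 := by
    replace h : _ ∧ _ ∧ _ ∧ _ := ⟨h 0 1 5 6, h 0 2 4 5, h 1 3 4 5, h 2 3 5 6⟩
    grind
  have off₅ : t 0 4 = t 4 0 ∧ t 1 5 = t 5 1 ∧ t 3 6 = t 6 3 := by
    replace h : _ ∧ _ ∧ _ ∧ _ := ⟨h 0 1 2 6, h 0 2 3 5, h 1 2 3 4, h 2 4 5 6⟩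
    grind
  have off₆ : t 0 5 = t 5 0 ∧ t 1 4 = t 4 1 ∧ t 2 6 = t 6 2 := by
    replace h : _ ∧ _ ∧ _ ∧ _ := ⟨h 0 1 3 6, h 0 2 3 4, h 1 2 3 5, h 3 4 5 6⟩
    grind
  have off₇ : t 1 6 = t 6 1 ∧ t 2 4 = t 4 2 ∧ t 3 5 = t 5 3 := by
    replace h : _ ∧ _ ∧ _ ∧ _ := ⟨h 0 1 2 5, h 0 1 3 4, h 0 2 3 6, h 0 4 5 6⟩
    grind
  clear h
  fin_cases i <;> fin_cases j <;> simp [splitSign, *]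

theorem eq_zero_of_covWedge_curryLeft_stdG2star_eq_zero (h2 : (2 : F) ≠ 0)
    (b : Basis (Fin 7) F (Dual F V)) {f : Dual F V} (hf : f ≠ 0) {x : V}
    (h : covWedge f ((stdG2star b).curryLeft x) = 0) : x = 0 := by
  obtain ⟨E, rfl⟩ := exists_basis_dualBasis_eq b
  have skew (i j) : splitSign i • (f (E j) * E.repr x i) + splitSign j • (f (E i) * E.repr x j)
      = 0 := by
    rw [← endAction_smulRight] at h
    simpa using splitSign_smul_add_eq_zero_of_endAction_stdG2star_eq_zero h2 E h i j
  obtain ⟨j, hj⟩ : ∃ j, f (E j) ≠ 0 := by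
    contrapose! hf
    exact E.ext hf
  have xj : E.repr x j = 0 := by
    have := skew j j
    rw [← smul_add, smul_eq_zero_iff_eq, ← two_mul] at this
    simpa [h2, hj] using this
  refine E.ext_elem fun i ↦ ?_
  simpa [xj, hj, smul_eq_zero_iff_eq] using skew i j

theorem AltDec.exists_curryLeft_eq_zero [FiniteDimensional F V] {m : ℕ}
    {X : V [⋀^Fin (m + 1)]→ₗ[F] F} (hX : AltDec (m + 1) X) (hm : m + 1 < finrank F V) :
    ∃ x ≠ 0, X.curryLeft x = 0 := by
  obtain ⟨φ, rfl⟩ := hX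
  obtain ⟨x, hx, hx0⟩ := (LinearMap.ker (LinearMap.pi φ)).ne_bot_iff.mp
    (LinearMap.ker_ne_bot_of_finrank_lt (by simpa using hm))
  exact ⟨x, hx0, AlternatingMap.ext fun v ↦
    AlternatingMap.map_coord_zero (i := 0) Matrix.detRowAlternating hx⟩

theorem not_altDec_stdG2star_compLinearMap_ker_subtype (h2 : (2 : F) ≠ 0)
    (b : Basis (Fin 7) F (Dual F V)) {f : Dual F V} (hf : f ≠ 0) :
    ¬ AltDec 4 ((stdG2star b).compLinearMap (LinearMap.ker f).subtype) := by
  intro hdec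
  obtain ⟨E, -⟩ := exists_basis_dualBasis_eq b
  have := Module.Finite.of_basis E
  have hker : finrank F (LinearMap.ker f) + 1 = 7 := by
    rw [Dual.finrank_ker_add_one_of_ne_zero hf, finrank_eq_card_basis E, Fintype.card_fin]
  obtain ⟨x, hx0, hx⟩ := hdec.exists_curryLeft_eq_zero (by omega)
  refine hx0 (Subtype.ext (eq_zero_of_covWedge_curryLeft_stdG2star_eq_zero h2 b hf ?_))
  refine covWedge_eq_zero fun v hv ↦ ?_
  rw [AlternatingMap.curryLeft_compLinearMap] at hx
  exact congr($hx fun i ↦ ⟨v i, hv i⟩)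

end FourForms

section Darboux

variable {F : Type*} [Field F]

/-- The entries of the block matrix `diag(J, …, J, 0, …)` with `r` blocks `J = !![0, 1; -1, 0]`, the
normal form of an alternating bilinear form of rank `2 * r`. -/
def darbouxEntry : ℕ → ℕ → ℕ → ℤ
  | _ + 1, 0, 1 => 1
  | _ + 1, 1, 0 => -1
  | r + 1, i + 2, j + 2 => darbouxEntry r i j
  | _, _, _ => 0

theorem exists_basis_fin_add_two {W : Type*} [AddCommGroup W] [Module F W]
    {B : LinearMap.BilinForm F W} (hB : B.IsAlt) {u v : W} (huv : B u v = 1) {k : ℕ}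
    (G : Basis (Fin k) F ↥(LinearMap.ker (B u) ⊓ LinearMap.ker (B v))) :
    ∃ b : Basis (Fin (k + 2)) F W, ⇑b = Fin.cons u (Fin.cons v fun i ↦ (G i : W)) := by
  have hvu : B v u = -1 := by rw [← hB.neg_eq, huv]
  let G' := Basis.mkFinConsOfLE v (hB.self_eq_zero v) G inf_le_right
    (fun c x hx h ↦ by
      have hx' : B u x = 0 := hx.1
      simpa [huv, hx'] using congr(B u $h))
    (fun z hz ↦ ⟨-B u z, by
      have hz' : B v z = 0 := hz
      simp [huv, hz', hB.self_eq_zero]⟩)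
  let b := Basis.mkFinCons u G'
    (fun c x hx h ↦ by
      have hx' : B v x = 0 := hx
      simpa [hvu, hx'] using congr(B v $h))
    (fun z ↦ ⟨B v z, by simp [hvu]⟩)
  refine ⟨b, ?_⟩
  have hG' : ⇑G' = Fin.cons ⟨v, hB.self_eq_zero v⟩ (Submodule.inclusion inf_le_right ∘ G) :=
    Basis.coe_mkFinConsOfLE ..
  rw [Basis.coe_mkFinCons, hG']
  exact funext (Fin.cases rfl (Fin.cases rfl fun i ↦ rfl))

theorem exists_basis_eq_darbouxEntry {n : ℕ} {W : Type*} [AddCommGroup W] [Module F W]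
    [FiniteDimensional F W] (hn : finrank F W = n) {B : LinearMap.BilinForm F W} (hB : B.IsAlt) :
    ∃ (b : Basis (Fin n) F W) (r : ℕ), 2 * r ≤ n ∧ ∀ i j, B (b i) (b j) = darbouxEntry r i j := by
  induction n using Nat.strong_induction_on generalizing W with | h n ih =>
  by_cases h0 : ∀ u v, B u v = 0
  · exact ⟨finBasisOfFinrankEq F W hn, 0, Nat.zero_le _, fun i j ↦ by simp [h0, darbouxEntry]⟩
  obtain ⟨u, v, huv⟩ : ∃ u v, B u v = 1 := by
    push Not at h0
    obtain ⟨u, v, huv⟩ := h0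
    exact ⟨u, (B u v)⁻¹ • v, by simp [huv]⟩
  let W' := LinearMap.ker (B u) ⊓ LinearMap.ker (B v)
  obtain rfl : n = finrank F W' + 2 := by
    obtain ⟨b, -⟩ := exists_basis_fin_add_two hB huv (finBasis F W')
    simpa [hn] using finrank_eq_card_basis b
  obtain ⟨G, r, hr, hG⟩ := ih (finrank F W') (by omega) (B := B.restrict W') rfl
    fun x ↦ hB.self_eq_zero x
  obtain ⟨b, hb⟩ := exists_basis_fin_add_two hB huv G
  have hu (i) : B u (G i) = 0 := (G i).2.1
  have hv (i) : B v (G i) = 0 := (G i).2.2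
  have swap {x y : W} {c : F} (h : B x y = c) : B y x = -c := by rw [← hB.neg_eq, h]
  refine ⟨b, r + 1, by omega, ?_⟩
  rw [hb]
  refine Fin.cases (Fin.cases ?_ (Fin.cases ?_ fun j ↦ ?_))
    (Fin.cases (Fin.cases ?_ (Fin.cases ?_ fun j ↦ ?_))
      fun i ↦ Fin.cases ?_ (Fin.cases ?_ fun j ↦ ?_)) <;>
  simp [darbouxEntry, hB.self_eq_zero, huv, swap huv, hu, hv, swap (hu _), swap (hv _), ← hG]

end Darboux

section ComplementForm

variable {F : Type*} [Field F] {V : Type*} [AddCommGroup V] [Module F V] {n : ℕ}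

theorem covWedge_wedgeCov (f : Dual F V) (φ : Fin n → Dual F V) :
    covWedge f (wedgeCov n φ) = wedgeCov (n + 1) (Matrix.vecCons f φ) := by
  ext v
  rw [covWedge_apply, wedgeCov_apply, Matrix.det_succ_column_zero]
  refine Finset.sum_congr rfl fun i _ ↦ ?_
  rw [mul_assoc]
  rfl

theorem covWedge_covWedge_self (f : Dual F V) (A : V [⋀^Fin n]→ₗ[F] F) :
    covWedge f (covWedge f A) = 0 := by
  refine covWedge_eq_zero fun v hv ↦ ?_
  simp [covWedge_apply, hv]

theorem eq_zero_of_forall_covWedge_eq_zero (hn : n < finrank F V)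
    {A : V [⋀^Fin n]→ₗ[F] F} (hA : ∀ f, covWedge f A = 0) : A = 0 := by
  ext v
  obtain ⟨x, -, hx⟩ : ∃ x ∈ (⊤ : Submodule F V), x ∉ Submodule.span F (Set.range v) := by
    refine SetLike.exists_of_lt (lt_top_iff_ne_top.mpr fun h ↦ hn.not_ge ?_)
    have hcard : finrank F (Submodule.span F (Set.range v)) ≤ n :=
      (finrank_range_le_card v).trans_eq (Fintype.card_fin n)
    rwa [h, finrank_top] at hcard
  obtain ⟨f, hfx, hf⟩ := Submodule.exists_le_ker_of_notMem hx
  have hfv (i) : f (v i) = 0 := hf (Submodule.subset_span ⟨i, rfl⟩)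
  have := congr($(hA f) (Fin.cons x v))
  rw [covWedge_apply, Fin.sum_univ_succ] at this
  simpa [hfv, hfx] using this

/-- The alternating bilinear form `(α, β) ↦ (α ∧ β ∧ A)(e)` on `V*` by which a form `A` of
codegree two is encoded once a basis `e` of `V` is chosen. -/
noncomputable def complementForm (e : Fin (n + 2) → V) :
    (V [⋀^Fin n]→ₗ[F] F) →ₗ[F] LinearMap.BilinForm F (Dual F V) where
  toFun A := LinearMap.mk₂ F (fun f g ↦ covWedge f (covWedge g A) e)
    (by simp) (by simp) (by simp) (by simp)
  map_add' A A' := LinearMap.ext₂ fun f g ↦ by simp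
  map_smul' c A := LinearMap.ext₂ fun f g ↦ by simp

theorem complementForm_apply (e : Fin (n + 2) → V) (A : V [⋀^Fin n]→ₗ[F] F) (f g : Dual F V) :
    complementForm e A f g = covWedge f (covWedge g A) e :=
  rfl

theorem isAlt_complementForm (e : Fin (n + 2) → V) (A : V [⋀^Fin n]→ₗ[F] F) :
    (complementForm e A).IsAlt := by
  intro f
  exact congr($(covWedge_covWedge_self f A) e)

theorem complementForm_smul_det (e e' : Basis (Fin (n + 2)) F V) (A : V [⋀^Fin n]→ₗ[F] F) :
    complementForm e' A = e.det e' • complementForm e A := by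
  ext f g
  have := congr($((covWedge f (covWedge g A)).eq_smul_basis_det e) e')
  rwa [AlternatingMap.smul_apply, smul_eq_mul, mul_comm] at this

theorem complementForm_injective (e : Basis (Fin (n + 2)) F V) :
    Function.Injective (complementForm (F := F) (n := n) e) := by
  refine (injective_iff_map_eq_zero _).mpr fun A hA ↦ ?_
  have hdim : finrank F V = n + 2 := by simp [finrank_eq_card_basis e]
  refine eq_zero_of_forall_covWedge_eq_zero (by omega) fun g ↦
    eq_zero_of_forall_covWedge_eq_zero (by omega) fun f ↦ ?_
  exact ((covWedge f (covWedge g A)).map_basis_eq_zero_iff e).mp congr($hA f g)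

/-- The Levi-Civita symbol: the sign of `σ` if it is a permutation, and `0` otherwise. -/
def leviCivita (σ : Fin n → Fin n) : ℤ :=
  ∏ i, ∏ j ∈ Finset.Ioi i, if σ i < σ j then 1 else if σ j < σ i then -1 else 0

theorem leviCivita_perm (σ : Equiv.Perm (Fin n)) : leviCivita σ = Equiv.Perm.sign σ := by
  rw [Equiv.Perm.sign_eq_prod_prod_Ioi, Units.coe_prod]
  refine Finset.prod_congr rfl fun i _ ↦ (Finset.prod_congr rfl fun j hj ↦ ?_).trans
    (Units.coe_prod ..).symm
  have hij : σ i ≠ σ j := σ.injective.ne (Finset.mem_Ioi.mp hj).ne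
  obtain h | h := hij.lt_or_gt <;> simp [h, h.not_gt]

theorem leviCivita_eq_zero {σ : Fin n → Fin n} (hσ : ¬ σ.Injective) : leviCivita σ = 0 := by
  obtain ⟨i, j, hij, hne⟩ := Function.not_injective_iff.mp hσ
  wlog hlt : i < j generalizing i j
  · exact this j i hij.symm hne.symm (hne.lt_or_gt.resolve_left hlt)
  refine Finset.prod_eq_zero (Finset.mem_univ i) (Finset.prod_eq_zero (Finset.mem_Ioi.mpr hlt) ?_)
  simp only [hij, lt_irrefl, if_false]

theorem wedgeCov_dualBasis_comp_apply_self (e : Basis (Fin n) F V) (σ : Fin n → Fin n) :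
    wedgeCov n (e.dualBasis ∘ σ) e = leviCivita σ := by
  have hdet : wedgeCov n (e.dualBasis ∘ σ) e =
      ((1 : Matrix (Fin n) (Fin n) F).submatrix id σ).det := by
    rw [wedgeCov_apply]
    congr 1
    ext i j
    simp [Matrix.one_apply, Finsupp.single_apply]
  by_cases hσ : σ.Injective
  · obtain ⟨τ, rfl⟩ : ∃ τ : Equiv.Perm (Fin n), ⇑τ = σ :=
      ⟨Equiv.ofBijective σ (Finite.injective_iff_bijective.mp hσ), rfl⟩
    rw [hdet, Matrix.det_permute', Matrix.det_one, mul_one, leviCivita_perm]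
  · obtain ⟨i, j, hij, hne⟩ := Function.not_injective_iff.mp hσ
    rw [hdet, leviCivita_eq_zero hσ, Matrix.det_zero_of_column_eq hne fun k ↦ ?_, Int.cast_zero]
    rw [Matrix.submatrix_apply, Matrix.submatrix_apply, hij]

end ComplementForm

section NormalForm

variable {F : Type*} [Field F] {V : Type*} [AddCommGroup V] [Module F V]

theorem AltDec.smul {m : ℕ} {X : V [⋀^Fin (m + 1)]→ₗ[F] F} (hX : AltDec (m + 1) X) (c : F) :
    AltDec (m + 1) (c • X) := by
  obtain ⟨φ, rfl⟩ := hX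
  refine ⟨Matrix.vecCons (c • φ 0) (Fin.tail φ), ?_⟩
  rw [← covWedge_wedgeCov, map_smul, LinearMap.smul_apply, covWedge_wedgeCov]
  congr
  exact (Fin.cons_self_tail φ).symm

theorem complementForm_wedgeCov_dualBasis (e : Basis (Fin 6) F V) (i j k l p q : Fin 6) :
    complementForm e
      (wedgeCov 4 ![e.dualBasis i, e.dualBasis j, e.dualBasis k, e.dualBasis l])
      (e.dualBasis p) (e.dualBasis q) = leviCivita ![p, q, i, j, k, l] := by
  have hcomp : ![e.dualBasis p, e.dualBasis q, e.dualBasis i, e.dualBasis j, e.dualBasis k,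
      e.dualBasis l] = e.dualBasis ∘ ![p, q, i, j, k, l] := List.ofFn_inj.mp rfl
  rw [complementForm_apply, covWedge_wedgeCov, covWedge_wedgeCov, hcomp,
    wedgeCov_dualBasis_comp_apply_self]

theorem exists_basis_fourForm_eq (hV : finrank F V = 6) {ω : V [⋀^Fin 4]→ₗ[F] F}
    (hω : ¬ AltDec 4 ω) : ∃ (b : Basis (Fin 6) F (Dual F V)) (δ : F), δ ≠ 0 ∧
      (ω = δ • (wedgeCov 4 ![b 2, b 3, b 4, b 5] + wedgeCov 4 ![b 0, b 1, b 4, b 5]) ∨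
        ω = δ • (wedgeCov 4 ![b 2, b 3, b 4, b 5] + wedgeCov 4 ![b 0, b 1, b 4, b 5] +
          wedgeCov 4 ![b 0, b 1, b 2, b 3])) := by
  have : FiniteDimensional F V := .of_finrank_pos (by omega)
  let e := finBasisOfFinrankEq F V hV
  obtain ⟨b, r, hr, hb⟩ := exists_basis_eq_darbouxEntry
    (Subspace.dual_finrank_eq.trans hV) (isAlt_complementForm e ω)
  obtain ⟨E, rfl⟩ := exists_basis_dualBasis_eq b
  have key (ω' : V [⋀^Fin 4]→ₗ[F] F) (h : ∀ p q, complementForm E ω' (E.dualBasis p)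
      (E.dualBasis q) = darbouxEntry r p q) : ω = e.det E • ω' := by
    refine complementForm_injective E (LinearMap.BilinForm.ext_basis E.dualBasis fun p q ↦ ?_)
    rw [complementForm_smul_det e E, map_smul]
    simp only [LinearMap.smul_apply, hb, h]
  have hr3 : r ≤ 3 := by omega
  refine ⟨E.dualBasis, e.det E, (e.isUnit_det E).ne_zero, ?_⟩
  interval_cases r
  · refine absurd ?_ hω
    rw [key 0 fun p q ↦ by simp [darbouxEntry], smul_zero]
    simpa using AltDec.smul (F := F) (V := V) (m := 3) ⟨0, rfl⟩ 0
  · refine absurd ?_ hω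
    rw [key (wedgeCov 4 ![E.dualBasis 2, E.dualBasis 3, E.dualBasis 4, E.dualBasis 5]) fun p q ↦ ?_]
    · exact .smul ⟨_, rfl⟩ _
    · rw [complementForm_wedgeCov_dualBasis]
      congr 1
      decide +revert
  · refine .inl (key _ fun p q ↦ ?_)
    simp only [map_add, LinearMap.add_apply, complementForm_wedgeCov_dualBasis, ← Int.cast_add]
    congr 1
    decide +revert
  · refine .inr (key _ fun p q ↦ ?_)
    simp only [map_add, LinearMap.add_apply, complementForm_wedgeCov_dualBasis, ← Int.cast_add]
    congr 1
    decide +revert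

end NormalForm

section Extension

variable {F : Type*} [Field F] {M N : Type*} [AddCommGroup M] [Module F M] [AddCommGroup N]
  [Module F N]

theorem exists_linearEquiv_prod_ker {R : M →ₗ[F] N} (hR : Function.Surjective R) :
    ∃ e : M ≃ₗ[F] N × LinearMap.ker R, ∀ x, (e x).1 = R x := by
  obtain ⟨p, hp⟩ := (LinearMap.ker R).subtype.exists_leftInverse_of_injective
    (Submodule.ker_subtype _)
  have hp' (x : LinearMap.ker R) : p x = x := congr($hp x)
  exact ⟨R.equivProdOfSurjectiveOfIsCompl p (LinearMap.range_eq_top.mpr hR)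
    (LinearMap.range_eq_top.mpr fun x ↦ ⟨x, hp' x⟩) (LinearMap.isCompl_of_proj hp'), fun _ ↦ rfl⟩

theorem exists_linearEquiv_apply_eq {M' : Type*} [AddCommGroup M'] [Module F M']
    [FiniteDimensional F M] [FiniteDimensional F M'] (hM : finrank F M' = finrank F M)
    {R : M →ₗ[F] N} (hR : Function.Surjective R) {L : M' →ₗ[F] N} (hL : Function.Surjective L) :
    ∃ e : M' ≃ₗ[F] M, ∀ x, R (e x) = L x := by
  obtain ⟨eR, heR⟩ := exists_linearEquiv_prod_ker hR
  obtain ⟨eL, heL⟩ := exists_linearEquiv_prod_ker hL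
  have := Module.Finite.of_surjective R hR
  have hker : finrank F (LinearMap.ker L) = finrank F (LinearMap.ker R) := by
    simpa [hM, eR.finrank_eq] using eL.finrank_eq.symm
  let e := (LinearEquiv.refl F N).prodCongr (LinearEquiv.ofFinrankEq _ _ hker)
  refine ⟨eL.trans (e.trans eR.symm), fun x ↦ ?_⟩
  simp [← heR, ← heL, e]

theorem exists_basis_map_eq {ι : Type*} [Fintype ι] [FiniteDimensional F M] {R : M →ₗ[F] N}
    (hR : Function.Surjective R) (hM : finrank F M = Fintype.card ι) {G : ι → N}
    (hG : Submodule.span F (Set.range G) = ⊤) : ∃ b : Basis ι F M, ∀ i, R (b i) = G i := by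
  classical
  have hL : Function.Surjective (Fintype.linearCombination F G) :=
    LinearMap.range_eq_top.mp ((Fintype.range_linearCombination F G).trans hG)
  obtain ⟨e, he⟩ := exists_linearEquiv_apply_eq (by simp [hM]) hR hL
  refine ⟨(Pi.basisFun F ι).map e, fun i ↦ ?_⟩
  simp [he]

end Extension

section Restriction

variable {F : Type*} [Field F] {U V : Type*} [AddCommGroup U] [Module F U] [AddCommGroup V]
  [Module F V]

/-- The four-form `stdG2star` of a family of seven covectors that need not be a basis, as it arises
by restricting `stdG2star b` to a subspace. -/
noncomputable def starForm (G : Fin 7 → Dual F U) : U [⋀^Fin 4]→ₗ[F] F :=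
  wedgeCov 4 ![G 0, G 1, G 2, G 3] - wedgeCov 4 ![G 0, G 1, G 4, G 5] -
    wedgeCov 4 ![G 2, G 3, G 4, G 5] - wedgeCov 4 ![G 1, G 3, G 5, G 6] +
    wedgeCov 4 ![G 1, G 2, G 4, G 6] + wedgeCov 4 ![G 0, G 3, G 4, G 6] +
    wedgeCov 4 ![G 0, G 2, G 5, G 6]

theorem wedgeCov_compLinearMap {n : ℕ} (φ : Fin n → Dual F V) (P : U →ₗ[F] V) :
    (wedgeCov n φ).compLinearMap P = wedgeCov n fun i ↦ φ i ∘ₗ P :=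
  rfl

theorem stdG2star_compLinearMap (b : Basis (Fin 7) F (Dual F V)) (P : U →ₗ[F] V) :
    (stdG2star b).compLinearMap P = starForm fun i ↦ b i ∘ₗ P := by
  have hbw (i j k l) : (bw b i j k l).compLinearMap P =
      wedgeCov 4 ![b i ∘ₗ P, b j ∘ₗ P, b k ∘ₗ P, b l ∘ₗ P] := by
    rw [bw, wedgeCov_compLinearMap]
    congr 1
    exact List.ofFn_inj.mp rfl
  simp only [starForm, ← hbw]
  rfl

theorem alternatingMap_fin_four_ext {A B : U [⋀^Fin 4]→ₗ[F] F}
    (h : ∀ x y z w, A ![x, y, z, w] = B ![x, y, z, w]) : A = B := by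
  ext v
  have hv : v = ![v 0, v 1, v 2, v 3] := List.ofFn_inj.mp rfl
  rw [hv]
  exact h ..

-- The hyperplane is the kernel of the null covector `f^0 - f^6`.
theorem starForm_eq_smul_add (b : Fin 6 → Dual F U) (δ : F) :
    starForm ![δ • b 0, b 1, b 4 + b 3, b 5 - δ • b 2, -(δ • b 2), b 3, δ • b 0] =
      δ • (wedgeCov 4 ![b 2, b 3, b 4, b 5] + wedgeCov 4 ![b 0, b 1, b 4, b 5]) := by
  refine alternatingMap_fin_four_ext fun x y z w ↦ ?_
  simp only [starForm, Matrix.cons_val, AlternatingMap.add_apply, AlternatingMap.sub_apply,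
    AlternatingMap.smul_apply, wedgeCov_four_apply, LinearMap.add_apply, LinearMap.sub_apply,
    LinearMap.neg_apply, LinearMap.smul_apply, smul_eq_mul]
  ring

-- The hyperplane is the kernel of `t • f^0 - s • f^4`, a covector of norm `t² - s² = t - s` in the
-- split metric; as this takes every value, no square root of the coefficient is needed.
theorem starForm_eq_smul_add_add (b : Fin 6 → Dual F U) {s t : F} (hst : s + t = 1) :
    starForm ![-(s • b 4), b 0, b 5, s • b 1 - t • b 2, -(t • b 4), b 3, s • b 2 - t • b 1] =
      (s - t) • (wedgeCov 4 ![b 2, b 3, b 4, b 5] + wedgeCov 4 ![b 0, b 1, b 4, b 5] +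
        wedgeCov 4 ![b 0, b 1, b 2, b 3]) := by
  obtain rfl : s = 1 - t := by grind
  refine alternatingMap_fin_four_ext fun x y z w ↦ ?_
  simp only [starForm, Matrix.cons_val, AlternatingMap.add_apply, AlternatingMap.sub_apply,
    AlternatingMap.smul_apply, wedgeCov_four_apply, LinearMap.sub_apply, LinearMap.neg_apply,
    LinearMap.smul_apply, smul_eq_mul]
  ring

theorem span_range_eq_top_of_basis_mem {R M ι κ : Type*} [Semiring R] [AddCommMonoid M] [Module R M]
    (b : Basis ι R M) {G : κ → M} (hG : ∀ i, b i ∈ Submodule.span R (Set.range G)) :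
    Submodule.span R (Set.range G) = ⊤ := by
  rw [eq_top_iff, ← b.span_eq]
  exact Submodule.span_le.mpr (Set.range_subset_iff.mpr hG)

theorem exists_span_eq_top_and_starForm_eq_smul_add (b : Basis (Fin 6) F (Dual F U)) {δ : F}
    (hδ : δ ≠ 0) :
    ∃ G : Fin 7 → Dual F U, Submodule.span F (Set.range G) = ⊤ ∧ starForm G =
      δ • (wedgeCov 4 ![b 2, b 3, b 4, b 5] + wedgeCov 4 ![b 0, b 1, b 4, b 5]) := by
  refine ⟨_, span_range_eq_top_of_basis_mem b fun i ↦ ?_, starForm_eq_smul_add b δ⟩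
  set G := ![δ • b 0, b 1, b 4 + b 3, b 5 - δ • b 2, -(δ • b 2), b 3, δ • b 0]
  have mem (i) : G i ∈ Submodule.span F (Set.range G) := Submodule.subset_span ⟨i, rfl⟩
  match i with
  | 0 => exact (Submodule.smul_mem_iff _ hδ).mp (mem 0)
  | 1 => exact mem 1
  | 2 => exact (Submodule.smul_mem_iff _ hδ).mp (neg_mem_iff.mp (mem 4))
  | 3 => exact mem 5
  | 4 => simpa [G] using sub_mem (mem 2) (mem 5)
  | 5 => simpa [G] using sub_mem (mem 3) (mem 4)

theorem exists_span_eq_top_and_starForm_eq_smul_add_add (h2 : (2 : F) ≠ 0)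
    (b : Basis (Fin 6) F (Dual F U)) {δ : F} (hδ : δ ≠ 0) :
    ∃ G : Fin 7 → Dual F U, Submodule.span F (Set.range G) = ⊤ ∧ starForm G =
      δ • (wedgeCov 4 ![b 2, b 3, b 4, b 5] + wedgeCov 4 ![b 0, b 1, b 4, b 5] +
        wedgeCov 4 ![b 0, b 1, b 2, b 3]) := by
  obtain ⟨s, t, hst, rfl⟩ : ∃ s t : F, s + t = 1 ∧ s - t = δ :=
    ⟨(1 + δ) / 2, (1 - δ) / 2, by grind, by grind⟩
  refine ⟨_, span_range_eq_top_of_basis_mem b fun i ↦ ?_, starForm_eq_smul_add_add b hst⟩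
  set G := ![-(s • b 4), b 0, b 5, s • b 1 - t • b 2, -(t • b 4), b 3, s • b 2 - t • b 1]
  have mem (i) : G i ∈ Submodule.span F (Set.range G) := Submodule.subset_span ⟨i, rfl⟩
  have hb1 : (s - t) • b 1 = s • G 3 + t • G 6 := by
    simp only [G, Matrix.cons_val]
    match_scalars <;> grind
  have hb2 : (s - t) • b 2 = t • G 3 + s • G 6 := by
    simp only [G, Matrix.cons_val]
    match_scalars <;> grind
  have hb4 : b 4 = -(G 0 + G 4) := by
    simp only [G, Matrix.cons_val]
    match_scalars
    grind
  match i with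
  | 0 => exact mem 1
  | 1 =>
    rw [← Submodule.smul_mem_iff _ hδ, hb1]
    exact add_mem (Submodule.smul_mem _ _ (mem 3)) (Submodule.smul_mem _ _ (mem 6))
  | 2 =>
    rw [← Submodule.smul_mem_iff _ hδ, hb2]
    exact add_mem (Submodule.smul_mem _ _ (mem 3)) (Submodule.smul_mem _ _ (mem 6))
  | 3 => exact mem 5
  | 4 => exact hb4 ▸ neg_mem (add_mem (mem 0) (mem 4))
  | 5 => exact mem 2

theorem exists_basis_stdG2star_compLinearMap_eq (h2 : (2 : F) ≠ 0) (hU : finrank F U = 6)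
    (hV : finrank F V = 7) {ι : U →ₗ[F] V} (hι : Function.Injective ι)
    {ω : U [⋀^Fin 4]→ₗ[F] F} (hω : ¬ AltDec 4 ω) :
    ∃ b : Basis (Fin 7) F (Dual F V), (stdG2star b).compLinearMap ι = ω := by
  have : FiniteDimensional F V := .of_finrank_pos (by omega)
  obtain ⟨G, hG, rfl⟩ : ∃ G : Fin 7 → Dual F U,
      Submodule.span F (Set.range G) = ⊤ ∧ starForm G = ω := by
    obtain ⟨b, δ, hδ, rfl | rfl⟩ := exists_basis_fourForm_eq hU hω
    · exact exists_span_eq_top_and_starForm_eq_smul_add b hδ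
    · exact exists_span_eq_top_and_starForm_eq_smul_add_add h2 b hδ
  obtain ⟨b, hb⟩ := exists_basis_map_eq (LinearMap.dualMap_surjective_of_injective hι)
    (by simp [Subspace.dual_finrank_eq, hV]) hG
  exact ⟨b, (stdG2star_compLinearMap b ι).trans (congrArg starForm (funext hb))⟩

end Restriction

section Hyperplane

variable {F : Type*} [Field F] {V : Type*} [AddCommGroup V] [Module F V]

theorem altLenLE_one_iff {m : ℕ} {X : V [⋀^Fin m]→ₗ[F] F} : AltLenLE m 1 X ↔ AltDec m X := by
  refine ⟨fun ⟨Y, hY, hX⟩ ↦ ?_, fun hX ↦ ⟨fun _ ↦ X, fun _ ↦ hX, by simp⟩⟩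
  rw [hX, Fin.sum_univ_one]
  exact hY 0

theorem AltDec.compLinearMap {U : Type*} [AddCommGroup U] [Module F U] {m : ℕ}
    {X : V [⋀^Fin m]→ₗ[F] F} (hX : AltDec m X) (P : U →ₗ[F] V) :
    AltDec m (X.compLinearMap P) := by
  obtain ⟨φ, rfl⟩ := hX
  exact ⟨_, wedgeCov_compLinearMap φ P⟩

theorem mem4Pow_starForm {W : Submodule F (Dual F V)} {G : Fin 7 → Dual F V}
    (hG : ∀ i, G i ∈ W) : mem4Pow W (starForm G) := by
  have hw (i j k l) : wedgeCov 4 ![G i, G j, G k, G l] ∈ Submodule.span F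
      {Y | ∃ φ : Fin 4 → Dual F V, (∀ i, φ i ∈ W) ∧ Y = wedgeCov 4 φ} :=
    Submodule.subset_span ⟨_, by simp [Fin.forall_fin_succ, hG], rfl⟩
  exact Submodule.add_mem _ (Submodule.add_mem _ (Submodule.add_mem _ (Submodule.sub_mem _
    (Submodule.sub_mem _ (Submodule.sub_mem _ (hw 0 1 2 3) (hw 0 1 4 5)) (hw 2 3 4 5))
    (hw 1 3 5 6)) (hw 1 2 4 6)) (hw 0 3 4 6)) (hw 0 2 5 6)

theorem mem4Pow.compLinearMap_eq {W : Submodule F (Dual F V)} {X : V [⋀^Fin 4]→ₗ[F] F}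
    (hX : mem4Pow W X) {Q : End F V} (hQ : ∀ φ ∈ W, φ ∘ₗ Q = φ) : X.compLinearMap Q = X := by
  induction hX using Submodule.span_induction with
  | mem X hX =>
    obtain ⟨φ, hφ, rfl⟩ := hX
    rw [wedgeCov_compLinearMap]
    exact congrArg _ (funext fun i ↦ hQ _ (hφ i))
  | zero => rfl
  | add X Y _ _ hX hY => rw [AlternatingMap.add_compLinearMap, hX, hY]
  | smul c X _ hX => exact congrArg (c • ·) hX

theorem exists_dual_apply_eq_one_and_ker_eq [FiniteDimensional F V] {U : Submodule F V}
    (hU : finrank F U + 1 = finrank F V) {e : V} (he : e ∉ U) :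
    ∃ f : Dual F V, f e = 1 ∧ LinearMap.ker f = U := by
  obtain ⟨f, hfU, hfe⟩ := LinearMap.exists_extend_of_notMem (0 : U →ₗ[F] F) he 1
  have hf : f ≠ 0 := fun h ↦ by simp [h] at hfe
  have hle : U ≤ LinearMap.ker f := fun x hx ↦ congr($hfU ⟨x, hx⟩)
  have hker := Dual.finrank_ker_add_one_of_ne_zero hf
  exact ⟨f, hfe, (Submodule.eq_of_le_of_finrank_le hle (by omega)).symm⟩

/-- The projection `x ↦ x - f x • e` onto the hyperplane `ker f` along a vector `e` with
`f e = 1`. -/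
def kerProj {f : Dual F V} {e : V} (he : f e = 1) : V →ₗ[F] LinearMap.ker f :=
  (LinearMap.id - f.smulRight e).codRestrict _ fun x ↦ by simp [he]

theorem coe_kerProj {f : Dual F V} {e : V} (he : f e = 1) (x : V) :
    (kerProj he x : V) = x - f x • e :=
  rfl

theorem compLinearMap_kerProj_compLinearMap_subtype {n : ℕ} {f : Dual F V} {e : V} (he : f e = 1)
    (A : LinearMap.ker f [⋀^Fin n]→ₗ[F] F) :
    (A.compLinearMap (kerProj he)).compLinearMap (LinearMap.ker f).subtype = A := by
  have hid : kerProj he ∘ₗ (LinearMap.ker f).subtype = LinearMap.id := by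
    ext x
    simp [coe_kerProj]
  rw [AlternatingMap.compLinearMap_assoc, hid, AlternatingMap.compLinearMap_id]

theorem mem4Pow_ker_eval_stdG2star_compLinearMap (b : Basis (Fin 7) F (Dual F V)) {f : Dual F V}
    {e : V} (he : f e = 1) : mem4Pow (LinearMap.ker (Dual.eval F V e))
      (((stdG2star b).compLinearMap (LinearMap.ker f).subtype).compLinearMap (kerProj he)) := by
  rw [AlternatingMap.compLinearMap_assoc, stdG2star_compLinearMap]
  exact mem4Pow_starForm fun i ↦ by simp [coe_kerProj, he]

theorem mem4Pow.compLinearMap_kerProj {X : V [⋀^Fin 4]→ₗ[F] F} {f : Dual F V} {e : V}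
    (hX : mem4Pow (LinearMap.ker (Dual.eval F V e)) X) (he : f e = 1) :
    (X.compLinearMap (LinearMap.ker f).subtype).compLinearMap (kerProj he) = X := by
  rw [AlternatingMap.compLinearMap_assoc]
  refine hX.compLinearMap_eq fun φ hφ ↦ LinearMap.ext fun x ↦ ?_
  have hφe : φ e = 0 := hφ
  simp [coe_kerProj, hφe]

end Hyperplane

section LieAlgebra

variable {F : Type*} [Field F] {g : Type*} [LieRing g] [LieAlgebra F g]

theorem lie_eq_smul_lie_sub_smul_lie {f : Dual F g} {e : g} (he : f e = 1)
    (habel : ∀ x y, f x = 0 → f y = 0 → ⁅x, y⁆ = (0 : g)) (x y : g) :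
    ⁅x, y⁆ = f x • ⁅e, y⁆ - f y • ⁅e, x⁆ := by
  have h := habel (x - f x • e) (y - f y • e) (by simp [he]) (by simp [he])
  simp only [lie_sub, sub_lie, smul_lie, lie_smul, lie_self, smul_zero, sub_zero,
    ← lie_skew x e] at h
  rw [sub_eq_zero, sub_eq_iff_eq_add] at h
  rw [h]
  module

theorem ceDiff_congr_of_abelian_ideal {u : LieIdeal F g}
    (habel : ∀ x ∈ u, ∀ y ∈ u, ⁅x, y⁆ = (0 : g)) {f : Dual F g}
    (hfu : LinearMap.ker f = u.toSubmodule) {e : g} (he : f e = 1) {k : ℕ}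
    {A B : g [⋀^Fin (k + 1)]→ₗ[F] F}
    (hAB : A.compLinearMap (LinearMap.ker f).subtype =
      B.compLinearMap (LinearMap.ker f).subtype) :
    ceDiff k A = ceDiff k B := by
  have mem_u (x : g) : f x = 0 ↔ x ∈ u := SetLike.ext_iff.mp hfu x
  simp only [← mem_u] at habel
  have hlie := lie_eq_smul_lie_sub_smul_lie he fun x y hx hy ↦ habel x hx y hy
  have hfD (x : g) : f ⁅e, x⁆ = 0 := by
    have hx : x - f x • e ∈ u := (mem_u _).mp (by simp [he])
    have hex : ⁅e, x⁆ ∈ u := by simpa using lie_mem_right F g u e _ hx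
    exact (mem_u _).mpr hex
  exact ceDiff_congr (D := LieAlgebra.ad F g e) hlie hfD
    fun v hv ↦ congr($hAB fun i ↦ ⟨v i, hv i⟩)

theorem stmt14_general (h2 : (2 : F) ≠ 0) (hg : finrank F g = 7)
    (u : LieIdeal F g) (habel : ∀ x ∈ u, ∀ y ∈ u, ⁅x, y⁆ = (0 : g))
    (hu : finrank F ↥u = 6) (e₇ : g) (he : e₇ ∉ u) :
    (∃ Ψ : g [⋀^Fin 4]→ₗ[F] F, ceDiff 3 ⇑Ψ = 0 ∧
        ∃ b : Basis (Fin 7) F (Dual F g), Ψ = stdG2star b) ↔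
      (∃ Ω : g [⋀^Fin 4]→ₗ[F] F, ceDiff 3 ⇑Ω = 0 ∧
        mem4Pow (LinearMap.ker (Dual.eval F g e₇)) Ω ∧ ¬ AltLenLE 4 1 Ω) := by
  have : FiniteDimensional F g := .of_finrank_pos (by omega)
  have hu' : finrank F u.toSubmodule = 6 := hu
  obtain ⟨f, hfe, hfu⟩ := exists_dual_apply_eq_one_and_ker_eq (by rw [hu', hg]) he
  have hf : f ≠ 0 := fun h ↦ by simp [h] at hfe
  have hker : finrank F (LinearMap.ker f) = 6 := by rw [hfu, hu']
  simp only [altLenLE_one_iff]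
  constructor
  · rintro ⟨_, hΨ, b, rfl⟩
    have hres := compLinearMap_kerProj_compLinearMap_subtype hfe
      ((stdG2star b).compLinearMap (LinearMap.ker f).subtype)
    refine ⟨_, ?_, mem4Pow_ker_eval_stdG2star_compLinearMap b hfe, fun hdec ↦ ?_⟩
    · rw [ceDiff_congr_of_abelian_ideal habel hfu hfe hres, hΨ]
    · refine not_altDec_stdG2star_compLinearMap_ker_subtype h2 b hf ?_
      exact hres ▸ hdec.compLinearMap (LinearMap.ker f).subtype
  · rintro ⟨Ω, hΩ, hmem, hdec⟩
    obtain ⟨b, hb⟩ := exists_basis_stdG2star_compLinearMap_eq h2 hker hg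
      (LinearMap.ker f).subtype_injective fun h ↦
        hdec (hmem.compLinearMap_kerProj hfe ▸ h.compLinearMap (kerProj hfe))
    exact ⟨_, (ceDiff_congr_of_abelian_ideal habel hfu hfe hb).trans hΩ, b, rfl⟩

end LieAlgebra

/-- Let `g` be a seven-dimensional real Lie algebra with a
six-dimensional abelian ideal `u` and `e₇ ∈ g ∖ u`.  Then `g` admits a cocalibrated
`G₂*`-structure (a closed four-form of the standard type `stdG2star`) iff there is a
closed four-form `Ω ∈ Λ⁴Ann(span e₇)` of length `≥ 2`. -/
theorem stmt14 {g : Type*} [LieRing g] [LieAlgebra ℝ g] [FiniteDimensional ℝ g]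
    (hg : finrank ℝ g = 7)
    (u : LieIdeal ℝ g) (habel : ∀ x ∈ u, ∀ y ∈ u, ⁅x, y⁆ = (0 : g))
    (hu : finrank ℝ ↥u = 6) (e₇ : g) (he : e₇ ∉ u) :
    (∃ Ψ : g [⋀^Fin 4]→ₗ[ℝ] ℝ, ceDiff 3 ⇑Ψ = 0 ∧
        ∃ b : Basis (Fin 7) ℝ (Module.Dual ℝ g), Ψ = stdG2star b) ↔
      (∃ Ω : g [⋀^Fin 4]→ₗ[ℝ] ℝ, ceDiff 3 ⇑Ω = 0 ∧
        mem4Pow (LinearMap.ker (Module.Dual.eval ℝ g e₇)) Ω ∧ ¬ AltLenLE 4 1 Ω) :=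
  stmt14_general two_ne_zero hg u habel hu e₇ he
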